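/- Fix d ≥ 2 and a fraction p/q in lowest terms with q ≥ 2, 1 ≤ p ≤ q−1, gcd(p,q) = 1. For 1 ≤ k ≤ d−1, let N_k be the number of σ_d-rotational sets with rotation number kp/(kq) (equal to p/q after reduction) that are the union of exactly k distinct σ_d-orbits. Then N_k = ∑_{j=1}^{k} (−1)^{k+j} C(k−1, j−1) C(d−2+jq, d−2). -/

import Mathlib

/-- The angle-multiplying map `σ_d : 𝕋 → 𝕋`, where the circle `𝕋 = ℝ/ℤ` is identified with
the set of representatives `[0,1) ⊆ ℝ` (and so ordered by comparing these representatives). -/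
noncomputable def sigmad (d : ℕ) (t : ℝ) : ℝ := Int.fract (d * t)

/-- The orbit of a point of the circle under `σ_d`. -/
def sigmaOrbit (d : ℕ) (t : ℝ) : Set ℝ := {s | ∃ k : ℕ, (sigmad d)^[k] t = s}

/-- `t : ZMod q → ℝ` lists (with indices viewed in `ℤ/qℤ`) the elements
`t 0 < t 1 < ⋯ < t (q-1)` of a `σ_d`-rotational set with rotation number `p/q`. -/
def IsRotational (d q : ℕ) (p : ZMod q) (t : ZMod q → ℝ) : Prop :=
  (∀ i, t i ∈ Set.Ico (0:ℝ) 1) ∧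
  (∀ i j : ZMod q, i.val < j.val → t i < t j) ∧
  p ≠ 0 ∧
  ∀ i, sigmad d (t i) = t (i + p)

/-- `N_k`: the number of `σ_d`-rotational sets with rotation number `kp/(kq)`
(equal to `p/q` after reduction) that are the union of exactly `k` distinct `σ_d`-orbits. -/
noncomputable def countRotSets (d q p k : ℕ) : ℕ :=
  Nat.card {A : Set ℝ //
    (∃ t : ZMod (k * q) → ℝ, Set.range t = A ∧
      IsRotational d (k * q) ((k * p : ℕ) : ZMod (k * q)) t) ∧
    {O : Set ℝ | ∃ x ∈ A, O = sigmaOrbit d x}.ncard = k}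

/-!
A rotational set `t` satisfies `d * t i = t (i + P) + a i` with `a i = ⌊d * t i⌋`, and since `d > 1`
the digits `a` determine `t`. Subtracting consecutive equations, the lengths of the arcs between
consecutive points satisfy `d * gap i = gap (i + P) + jump i` with integers `jump i` of sum `d - 1`.
Such gaps are all positive if and only if the jumps are nonnegative and not all zero on any cycle of
`i ↦ i + P`, and the points can be placed in `[0, 1)` if and only if the jump at the wrap-around
index `-1` is at least `1 + a 0`. Hence rotational sets correspond to the ways to distribute `d - 2`
units among `a 0` and the (corrected) jumps so that every cycle except that of `-1` receives a unit.

When `P = k * p` on `ℤ/kqℤ`, the cycles are the `k` residue classes modulo `k`, each of size `q`;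
they are also the orbits of `σ_d`. Inclusion-exclusion over the classes that receive nothing gives
the alternating sum.
-/

open Finset

section FiniteDynamics

variable {X K : Type*} [Field K] [LinearOrder K] [IsStrictOrderedRing K] {φ : X → X} {c : K}

theorem nonneg_of_comp_le_mul {s : Set X} (hs : s.Finite) (hφ : Set.MapsTo φ s s) (hc : 1 < c)
    {u : X → K} (hu : ∀ x ∈ s, u (φ x) ≤ c * u x) {x : X} (hx : x ∈ s) : 0 ≤ u x := by
  obtain ⟨m, hm, hmin⟩ := Set.exists_min_image s u hs ⟨x, hx⟩
  have hle : u m ≤ c * u m := (hmin _ (hφ hm)).trans (hu m hm)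
  have hm0 : 0 ≤ u m := by nlinarith
  exact hm0.trans (hmin x hx)

theorem eq_zero_of_mul_eq_comp {s : Set X} (hs : s.Finite) (hφ : Set.MapsTo φ s s) (hc : 1 < c)
    {u : X → K} (hu : ∀ x ∈ s, c * u x = u (φ x)) {x : X} (hx : x ∈ s) : u x = 0 := by
  have hneg : 0 ≤ -u x :=
    nonneg_of_comp_le_mul (u := -u) hs hφ hc
      (fun y hy => by simp only [Pi.neg_apply, mul_neg, hu y hy, le_refl]) hx
  exact le_antisymm (neg_nonneg.1 hneg)
    (nonneg_of_comp_le_mul hs hφ hc (fun y hy => (hu y hy).ge) hx)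

variable [Finite X]

theorem existsUnique_mul_eq_comp_add (φ : X → X) (hc : 1 < c) (b : X → K) :
    ∃! u : X → K, ∀ x, c * u x = u (φ x) + b x := by
  let L : (X → K) →ₗ[K] (X → K) := c • LinearMap.id - LinearMap.funLeft K K φ
  have hL (u : X → K) (x : X) : L u x = c * u x - u (φ x) := rfl
  have hinj : Function.Injective L := by
    refine (injective_iff_map_eq_zero L).2 fun u hu => funext fun x => ?_
    refine eq_zero_of_mul_eq_comp Set.finite_univ (Set.mapsTo_univ φ _) hc (fun y _ => ?_)
      (Set.mem_univ x)
    rw [← sub_eq_zero, ← hL, hu, Pi.zero_apply]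
  have hbij : Function.Bijective L := ⟨hinj, LinearMap.injective_iff_surjective.1 hinj⟩
  simpa only [funext_iff, hL, sub_eq_iff_eq_add'] using hbij.existsUnique b

theorem pos_iff_exists_iterate_pos (hc : 1 < c) {u b : X → K} (hb : ∀ x, 0 ≤ b x)
    (hu : ∀ x, c * u x = u (φ x) + b x) (x : X) : 0 < u x ↔ ∃ j, 0 < b (φ^[j] x) := by
  have hnonneg (y : X) : 0 ≤ u y :=
    nonneg_of_comp_le_mul Set.finite_univ (Set.mapsTo_univ φ _) hc
      (fun z _ => by rw [hu z]; exact le_add_of_nonneg_right (hb z)) (Set.mem_univ y)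
  constructor
  · contrapose!
    intro hzero
    have horbit : Set.MapsTo φ (Set.range fun j => φ^[j] x) (Set.range fun j => φ^[j] x) := by
      rintro _ ⟨j, rfl⟩
      exact ⟨j + 1, Function.iterate_succ_apply' φ j x⟩
    refine (eq_zero_of_mul_eq_comp (Set.toFinite _) horbit hc ?_ ⟨0, rfl⟩).le
    rintro _ ⟨j, rfl⟩
    rw [hu, (hzero j).antisymm (hb _), add_zero]
  · rintro ⟨j, hj⟩
    refine (hnonneg x).lt_of_ne' fun hx => hj.ne' ?_
    have hstep (y : X) (hy : u y = 0) : u (φ y) = 0 ∧ b y = 0 :=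
      (add_eq_zero_iff_of_nonneg (hnonneg _) (hb y)).1 (by rw [← hu, hy, mul_zero])
    have horbit : u (φ^[j] x) = 0 := by
      clear hj
      induction j with
      | zero => exact hx
      | succ j ih => rw [Function.iterate_succ_apply']; exact (hstep _ ih).1
    exact (hstep _ horbit).2

end FiniteDynamics

section CyclicSequences

variable {n : ℕ} {G : Type*} [AddCommGroup G]

/-- The discrete primitive, vanishing at `0`, of a sequence indexed by `ℤ/nℤ`. When the sequence has
sum zero, its forward differences recover the sequence even at the wrap-around index `-1`. -/
def cyclicPrimitive (c : ZMod n → G) (i : ZMod n) : G := ∑ m ∈ range i.val, c m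

theorem cyclicPrimitive_zero (c : ZMod n → G) : cyclicPrimitive c 0 = 0 := by
  rw [cyclicPrimitive, ZMod.val_zero, sum_range_zero]

variable [NeZero n]

theorem val_add_one_of_ne_neg_one {i : ZMod n} (hi : i ≠ -1) : (i + 1).val = i.val + 1 := by
  have hcast : ((i.val + 1 : ℕ) : ZMod n) = i + 1 := by simp
  have hne : i.val + 1 ≠ n := fun h => hi <| by
    rw [eq_neg_iff_add_eq_zero, ← hcast, h, ZMod.natCast_self]
  rw [← hcast, ZMod.val_natCast_of_lt (lt_of_le_of_ne i.val_lt hne)]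

theorem val_neg_one_add_one : (-1 : ZMod n).val + 1 = n := by
  cases n with
  | zero => exact (NeZero.ne 0 rfl).elim
  | succ m => rw [ZMod.val_neg_one]

theorem strictMono_val_iff_lt_add_one {α : Type*} [Preorder α] {t : ZMod n → α} :
    (∀ i j : ZMod n, i.val < j.val → t i < t j) ↔ ∀ i, i ≠ -1 → t i < t (i + 1) := by
  refine ⟨fun h i hi => h _ _ (by rw [val_add_one_of_ne_neg_one hi]; exact Nat.lt_succ_self _),
    fun h => ?_⟩
  have hmono : StrictMonoOn (fun m : ℕ => t m) (Set.Iio n) := by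
    refine strictMonoOn_of_lt_add_one Set.ordConnected_Iio fun m _ hm hm' => ?_
    have hne : (m : ZMod n) ≠ -1 := fun hm1 => by
      have hval := val_neg_one_add_one (n := n)
      rw [← hm1, ZMod.val_natCast_of_lt hm] at hval
      exact (Set.mem_Iio.1 hm').ne hval
    simpa only [Nat.cast_add, Nat.cast_one] using h m hne
  intro i j hij
  simpa only [ZMod.natCast_zmod_val] using hmono i.val_lt j.val_lt hij

theorem eq_of_range_eq_of_strictMono_val {α : Type*} [LinearOrder α] {t t' : ZMod n → α}
    (ht : ∀ i j : ZMod n, i.val < j.val → t i < t j)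
    (ht' : ∀ i j : ZMod n, i.val < j.val → t' i < t' j) (h : Set.range t = Set.range t') :
    t = t' := by
  have hsurj : Function.Surjective fun i : Fin n => ((i : ℕ) : ZMod n) := fun i =>
    ⟨⟨i.val, i.val_lt⟩, ZMod.natCast_zmod_val i⟩
  have hmono {s : ZMod n → α} (hs : ∀ i j : ZMod n, i.val < j.val → s i < s j) :
      StrictMono (s ∘ fun i : Fin n => ((i : ℕ) : ZMod n)) := fun i j hij =>
    hs _ _ (by rwa [ZMod.val_natCast_of_lt i.2, ZMod.val_natCast_of_lt j.2])
  refine hsurj.injective_comp_right (((hmono ht).range_inj (hmono ht')).1 ?_)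
  rw [hsurj.range_comp, hsurj.range_comp, h]

theorem eq_of_zero_eq_of_sub_eq {a b : ZMod n → G} (h0 : a 0 = b 0)
    (h : ∀ i, a (i + 1) - a i = b (i + 1) - b i) : a = b := by
  have hnat (m : ℕ) : a m = b m := by
    induction m with
    | zero => simpa only [Nat.cast_zero] using h0
    | succ m ih =>
      have hm := h m
      rw [ih] at hm
      simpa only [Nat.cast_succ] using sub_left_injective hm
  funext i
  simpa only [ZMod.natCast_zmod_val] using hnat i.val

theorem sum_range_natCast (c : ZMod n → G) : ∑ m ∈ range n, c m = ∑ i, c i :=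
  sum_bij' (fun m _ => (m : ZMod n)) (fun i _ => i.val) (fun _ _ => mem_univ _)
    (fun i _ => mem_range.2 i.val_lt) (fun _ hm => ZMod.val_natCast_of_lt (mem_range.1 hm))
    (fun i _ => ZMod.natCast_zmod_val i) (fun _ _ => rfl)

theorem cyclicPrimitive_add_one_sub {c : ZMod n → G} (hc : ∑ i, c i = 0) (i : ZMod n) :
    cyclicPrimitive c (i + 1) - cyclicPrimitive c i = c i := by
  have hsucc : cyclicPrimitive c i + c i = ∑ m ∈ range (i.val + 1), c m := by
    rw [sum_range_succ, ZMod.natCast_zmod_val, cyclicPrimitive]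
  rw [sub_eq_iff_eq_add', hsucc]
  obtain rfl | hi := eq_or_ne i (-1)
  · rw [neg_add_cancel, cyclicPrimitive_zero, val_neg_one_add_one, sum_range_natCast, hc]
  · rw [cyclicPrimitive, val_add_one_of_ne_neg_one hi]

theorem sum_add_one_sub_eq_zero (a : ZMod n → G) : ∑ i, (a (i + 1) - a i) = 0 := by
  rw [sum_sub_distrib, sub_eq_zero]
  exact Equiv.sum_comp (Equiv.addRight (1 : ZMod n)) a

end CyclicSequences

section RotationalSets

variable {n d : ℕ} {P : ZMod n}

/-- The length of the arc of the circle from `t i` to its cyclic successor `t (i + 1)`; the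
correction at `i = -1` accounts for the arc passing through `0`. -/
noncomputable def gap (t : ZMod n → ℝ) (i : ZMod n) : ℝ :=
  t (i + 1) - t i + if i = -1 then 1 else 0

/-- The number of full turns by which `σ_d` stretches the arc from `t i` to `t (i + 1)`, in terms of
the digits `a i = ⌊d * t i⌋`: see `mul_gap`. -/
def jump (d : ℕ) (P : ZMod n) (a : ZMod n → ℤ) (i : ZMod n) : ℤ :=
  a (i + 1) - a i + (if i = -1 then (d : ℤ) else 0) - if i + P = -1 then 1 else 0

theorem mul_gap {t : ZMod n → ℝ} {a : ZMod n → ℤ} (h : ∀ i, d * t i = t (i + P) + a i)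
    (i : ZMod n) : d * gap t i = gap t (i + P) + jump d P a i := by
  have hi := h i
  have hi1 := h (i + 1)
  rw [add_right_comm] at hi1
  unfold gap jump
  push_cast
  rw [mul_add, mul_sub, hi, hi1, mul_ite, mul_one, mul_zero]
  ring

theorem jump_neg_one (hP : P ≠ 0) (a : ZMod n → ℤ) : jump d P a (-1) = a 0 - a (-1) + d := by
  simp [jump, hP]

/-- The sequences of leading base-`d` digits of the `σ_d`-rotational sets with rotation number
`P/n`: see `bijOn_floor_mul`. -/
structure IsDigitSequence (d : ℕ) (P : ZMod n) (a : ZMod n → ℤ) : Prop where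
  zero_nonneg : 0 ≤ a 0
  last_lt : a (-1) < d
  jump_nonneg : ∀ i, 0 ≤ jump d P a i
  exists_jump_pos : ∀ i, ∃ j : ℕ, 0 < jump d P a (i + j • P)

theorem IsRotational.mul_eq_add_floor {t : ZMod n → ℝ} (ht : IsRotational d n P t) (i : ZMod n) :
    d * t i = t (i + P) + ⌊d * t i⌋ := by
  rw [← ht.2.2.2 i, sigmad, Int.fract_add_floor]

/-- The digit sequence with first digit `f none` and jumps `f (some i)`, except that the jump at the
wrap-around index `-1` is `f (some (-1)) + 1 + f none`. The shift is there because the constraints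
`0 ≤ a 0` and `a (-1) < d` say exactly that the jump at `-1` is at least `1 + a 0`. -/
def digits (d : ℕ) (P : ZMod n) (f : Option (ZMod n) → ℕ) (i : ZMod n) : ℤ :=
  f none + cyclicPrimitive (fun j => (f (some j) : ℤ) +
    (if j = -1 then (1 + f none - d : ℤ) else 0) + if j + P = -1 then 1 else 0) i

theorem digits_zero (f : Option (ZMod n) → ℕ) : digits d P f 0 = f none := by
  rw [digits, cyclicPrimitive_zero, add_zero]

theorem IsDigitSequence.exists_jump_eq (hP : P ≠ 0) {a : ZMod n → ℤ}
    (ha : IsDigitSequence d P a) : ∃ f : Option (ZMod n) → ℕ, a 0 = f none ∧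
      ∀ i, jump d P a i = f (some i) + if i = -1 then (1 + f none : ℤ) else 0 := by
  have hrest (i : ZMod n) : 0 ≤ jump d P a i - if i = -1 then 1 + a 0 else 0 := by
    have hi := ha.jump_nonneg i
    split_ifs with h
    · have hlast := jump_neg_one (d := d) hP a
      have hlt := ha.last_lt
      rw [h]
      omega
    · omega
  obtain ⟨m, hm⟩ := Int.eq_ofNat_of_zero_le ha.zero_nonneg
  choose g hg using fun i => Int.eq_ofNat_of_zero_le (hrest i)
  rw [hm] at hg
  exact ⟨fun o => o.elim m g, hm, fun i => sub_eq_iff_eq_add.1 (hg i)⟩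

variable [NeZero n]

theorem sum_gap (t : ZMod n → ℝ) : ∑ i, gap t i = 1 := by
  simp only [gap, sum_add_distrib, sum_add_one_sub_eq_zero, sum_ite_eq', mem_univ, if_true,
    zero_add]

theorem sum_jump (a : ZMod n → ℤ) : ∑ i, jump d P a i = d - 1 := by
  simp only [jump, sum_add_distrib, sum_sub_distrib _ (fun _ => ite _ _ _), sum_add_one_sub_eq_zero,
    ← eq_sub_iff_add_eq, sum_ite_eq', mem_univ, if_true, zero_add]

theorem gap_pos_iff {t : ZMod n → ℝ} : (∀ i, 0 < gap t i) ↔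
    (∀ i j : ZMod n, i.val < j.val → t i < t j) ∧ t (-1) < t 0 + 1 := by
  rw [strictMono_val_iff_lt_add_one]
  constructor
  · intro h
    refine ⟨fun i hi => ?_, ?_⟩
    · simpa only [gap, if_neg hi, add_zero, sub_pos] using h i
    · have hlast := h (-1)
      rw [gap, neg_add_cancel, if_pos rfl] at hlast
      linarith
  · rintro ⟨hstep, hlast⟩ i
    obtain rfl | hi := eq_or_ne i (-1)
    · rw [gap, neg_add_cancel, if_pos rfl]
      linarith
    · simpa only [gap, if_neg hi, add_zero, sub_pos] using hstep i hi

theorem jump_nonneg_of_gap_pos {t : ZMod n → ℝ} {a : ZMod n → ℤ}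
    (h : ∀ i, d * t i = t (i + P) + a i) (ht : ∀ i, 0 < gap t i) (hd : 0 < d) (i : ZMod n) :
    0 ≤ jump d P a i := by
  have hle : gap t (i + P) ≤ 1 := by
    rw [← sum_gap t]
    exact single_le_sum (fun j _ => (ht j).le) (mem_univ _)
  have hpos : 0 < d * gap t i := mul_pos (Nat.cast_pos.2 hd) (ht i)
  have hlt : (-1 : ℝ) < jump d P a i := by linarith [mul_gap h i]
  exact Int.le_of_sub_one_lt (by exact_mod_cast hlt)

theorem gap_pos_iff_exists_jump_pos (hd : 2 ≤ d) {t : ZMod n → ℝ} {a : ZMod n → ℤ}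
    (h : ∀ i, d * t i = t (i + P) + a i) (ha : ∀ i, 0 ≤ jump d P a i) (i : ZMod n) :
    0 < gap t i ↔ ∃ j : ℕ, 0 < jump d P a (i + j • P) := by
  have hiff := pos_iff_exists_iterate_pos (φ := (· + P)) (by exact_mod_cast hd : (1 : ℝ) < d)
    (fun i => by exact_mod_cast ha i) (mul_gap h) i
  simpa only [add_right_iterate, Int.cast_pos] using hiff

namespace IsRotational

theorem gap_pos {t : ZMod n → ℝ} (ht : IsRotational d n P t) (i : ZMod n) : 0 < gap t i := by
  obtain ⟨hIco, hmono, -⟩ := ht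
  exact gap_pos_iff.2 ⟨hmono, by linarith [(hIco (-1)).2, (hIco 0).1]⟩ i

theorem isDigitSequence_floor (hd : 2 ≤ d) {t : ZMod n → ℝ} (ht : IsRotational d n P t) :
    IsDigitSequence d P fun i => ⌊d * t i⌋ := by
  have hd0 : (0 : ℝ) < d := by positivity
  have hjump := jump_nonneg_of_gap_pos ht.mul_eq_add_floor ht.gap_pos (by omega)
  refine ⟨Int.floor_nonneg.2 (mul_nonneg hd0.le (ht.1 0).1), Int.floor_lt.2 ?_, hjump, fun i =>
    (gap_pos_iff_exists_jump_pos hd ht.mul_eq_add_floor hjump i).1 (ht.gap_pos i)⟩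
  exact_mod_cast mul_lt_of_lt_one_right hd0 (ht.1 (-1)).2

end IsRotational

theorem val_le_val_neg_one (i : ZMod n) : i.val ≤ (-1 : ZMod n).val := by
  have hi := i.val_lt
  have hlast := val_neg_one_add_one (n := n)
  omega

theorem IsDigitSequence.isRotational (hd : 2 ≤ d) (hP : P ≠ 0) {a : ZMod n → ℤ}
    (ha : IsDigitSequence d P a) {t : ZMod n → ℝ} (h : ∀ i, d * t i = t (i + P) + a i) :
    IsRotational d n P t := by
  have hd' : (2 : ℝ) ≤ d := by exact_mod_cast hd
  have hmono : ∀ i j : ZMod n, i.val < j.val → t i < t j :=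
    (gap_pos_iff.1 fun i =>
      (gap_pos_iff_exists_jump_pos hd h ha.jump_nonneg i).2 (ha.exists_jump_pos i)).1
  have hzero : 0 ≤ t 0 := by
    have hlt : t 0 < t (0 + P) :=
      hmono _ _ (by rw [ZMod.val_zero, zero_add]; exact ZMod.val_pos.2 hP)
    have ha0 : (0 : ℝ) ≤ a 0 := by exact_mod_cast ha.zero_nonneg
    nlinarith [h 0]
  have hlast : t (-1) < 1 := by
    have hlt : t (-1 + P) < t (-1) := hmono _ _ <| (val_le_val_neg_one _).lt_of_ne fun heq =>
      hP (by simpa using ZMod.val_injective n heq)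
    have ha1 : (a (-1) : ℝ) ≤ d - 1 := by exact_mod_cast Int.le_sub_one_of_lt ha.last_lt
    nlinarith [h (-1)]
  have hle {i j : ZMod n} (hij : i.val ≤ j.val) : t i ≤ t j :=
    hij.lt_or_eq.elim (fun hlt => (hmono i j hlt).le) fun heq =>
      (congrArg t (ZMod.val_injective n heq)).le
  have hIco (i : ZMod n) : t i ∈ Set.Ico (0 : ℝ) 1 :=
    ⟨hzero.trans (hle (by rw [ZMod.val_zero]; exact Nat.zero_le _)),
      (hle (val_le_val_neg_one i)).trans_lt hlast⟩
  refine ⟨hIco, hmono, hP, fun i => ?_⟩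
  rw [sigmad, h, Int.fract_add_intCast, Int.fract_eq_self.2 (hIco _)]

theorem bijOn_floor_mul (hd : 2 ≤ d) (hP : P ≠ 0) :
    Set.BijOn (fun (t : ZMod n → ℝ) i => ⌊d * t i⌋) {t | IsRotational d n P t}
      {a | IsDigitSequence d P a} := by
  have hd1 : (1 : ℝ) < d := by exact_mod_cast hd
  refine ⟨fun t ht => ht.isDigitSequence_floor hd, fun t ht t' ht' heq => ?_, fun a ha => ?_⟩
  · refine (existsUnique_mul_eq_comp_add (· + P) hd1 fun i => (⌊d * t i⌋ : ℝ)).unique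
      ht.mul_eq_add_floor fun i => ?_
    have hi : ⌊d * t i⌋ = ⌊d * t' i⌋ := congrFun heq i
    rw [hi]
    exact ht'.mul_eq_add_floor i
  · obtain ⟨t, h, -⟩ := existsUnique_mul_eq_comp_add (· + P) hd1 fun i => (a i : ℝ)
    have ht : IsRotational d n P t := IsDigitSequence.isRotational hd hP ha h
    refine ⟨t, ht, funext fun i => ?_⟩
    simp only [h]
    rw [Int.floor_add_intCast, Int.floor_eq_zero_iff.2 (ht.1 _), zero_add]

theorem jump_digits (hd : 2 ≤ d) {f : Option (ZMod n) → ℕ} (hf : ∑ o, f o = d - 2)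
    (i : ZMod n) :
    jump d P (digits d P f) i = f (some i) + if i = -1 then (1 + f none : ℤ) else 0 := by
  have hsum : ∑ j, ((f (some j) : ℤ) + (if j = -1 then (1 + f none - d : ℤ) else 0) +
      if j + P = -1 then 1 else 0) = 0 := by
    have hf' : (f none : ℤ) + ∑ j, (f (some j) : ℤ) = d - 2 := by
      rw [Fintype.sum_option] at hf
      rw [← Nat.cast_sum]
      omega
    simp only [sum_add_distrib, ← eq_sub_iff_add_eq, sum_ite_eq', mem_univ, if_true]
    linarith
  rw [jump, digits, digits, add_sub_add_left_eq_sub, cyclicPrimitive_add_one_sub hsum]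
  split_ifs <;> ring

theorem eq_of_jump_eq {a b : ZMod n → ℤ} (h0 : a 0 = b 0)
    (h : ∀ i, jump d P a i = jump d P b i) : a = b :=
  eq_of_zero_eq_of_sub_eq h0 fun i => by
    simpa only [jump, sub_left_inj, add_left_inj] using h i

/-- The data `f` from which `digits` builds a digit sequence: weak compositions of `d - 2` with a
nonzero part on every cycle of `i ↦ i + P` other than that of `-1`, where the jump is automatically
positive. -/
def jumpCompositions (d : ℕ) (P : ZMod n) : Set (Option (ZMod n) → ℕ) :=
  {f | ∑ o, f o = d - 2 ∧ ∀ i, ∃ j : ℕ, i + j • P = -1 ∨ f (some (i + j • P)) ≠ 0}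

theorem isDigitSequence_digits (hd : 2 ≤ d) (hP : P ≠ 0) {f : Option (ZMod n) → ℕ}
    (hf : f ∈ jumpCompositions d P) : IsDigitSequence d P (digits d P f) := by
  obtain ⟨hsum, hpos⟩ := hf
  have hlast := jump_neg_one (d := d) hP (digits d P f)
  rw [jump_digits hd hsum, if_pos rfl, digits_zero] at hlast
  refine ⟨by rw [digits_zero]; positivity, by omega, fun i => ?_, fun i => ?_⟩
  · rw [jump_digits hd hsum]
    positivity
  · obtain ⟨j, hj⟩ := hpos i
    refine ⟨j, ?_⟩
    rw [jump_digits hd hsum]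
    split_ifs with hlast
    · positivity
    · rw [add_zero]
      exact_mod_cast Nat.pos_of_ne_zero (hj.resolve_left hlast)

theorem injOn_digits (hd : 2 ≤ d) : Set.InjOn (digits d P) (jumpCompositions d P) := by
  rintro f ⟨hf, -⟩ g ⟨hg, -⟩ hfg
  have hnone : f none = g none := by
    exact_mod_cast (digits_zero f).symm.trans ((congrFun hfg 0).trans (digits_zero g))
  refine funext (Option.forall.2 ⟨hnone, fun i => ?_⟩)
  have hjump := congrArg (jump d P · i) hfg
  simp only [jump_digits hd hf, jump_digits hd hg, hnone] at hjump
  exact_mod_cast add_right_cancel hjump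

theorem surjOn_digits (hd : 2 ≤ d) (hP : P ≠ 0) :
    Set.SurjOn (digits d P) (jumpCompositions d P) {a | IsDigitSequence d P a} := by
  intro a ha
  obtain ⟨f, hzero, hjump⟩ := ha.exists_jump_eq hP
  have hf : ∑ o, f o = d - 2 := by
    have hsum := sum_jump (d := d) (P := P) a
    simp only [hjump, sum_add_distrib, sum_ite_eq', mem_univ, if_true] at hsum
    rw [Fintype.sum_option]
    rw [← Nat.cast_sum] at hsum
    omega
  refine ⟨f, ⟨hf, fun i => ?_⟩, eq_of_jump_eq (d := d) (P := P) ?_ fun i => ?_⟩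
  · obtain ⟨j, hj⟩ := ha.exists_jump_pos i
    refine ⟨j, or_iff_not_imp_left.2 fun hne hfj => hj.ne' ?_⟩
    rw [hjump, if_neg hne, hfj, Nat.cast_zero, add_zero]
  · rw [digits_zero, hzero]
  · rw [jump_digits hd hf, hjump]

theorem ncard_isRotational (hd : 2 ≤ d) (hP : P ≠ 0) :
    {t | IsRotational d n P t}.ncard = (jumpCompositions d P).ncard := by
  have hdigits : Set.BijOn (digits d P) (jumpCompositions d P) {a | IsDigitSequence d P a} :=
    ⟨fun _ => isDigitSequence_digits hd hP, injOn_digits hd, surjOn_digits hd hP⟩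
  rw [(bijOn_floor_mul hd hP).ncard_eq, hdigits.ncard_eq]

end RotationalSets

section Counting

variable {α ι κ : Type*}

theorem card_filter_forall_not (s : Finset α) (R : Finset ι) (V : ι → α → Prop)
    [∀ i, DecidablePred (V i)] :
    (#{a ∈ s | ∀ i ∈ R, ¬V i a} : ℤ) =
      ∑ Q ∈ R.powerset, (-1 : ℤ) ^ #Q * #{a ∈ s | ∀ i ∈ Q, V i a} := by
  classical
  have hind (a : α) : (if ∀ i ∈ R, ¬V i a then 1 else 0 : ℤ) =
      ∑ Q ∈ R.powerset, (-1) ^ #Q * if ∀ i ∈ Q, V i a then 1 else 0 := by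
    calc (if ∀ i ∈ R, ¬V i a then 1 else 0 : ℤ)
        = ∏ i ∈ R, if ¬V i a then 1 else 0 := by rw [prod_ite_zero, prod_const_one]
      _ = ∏ i ∈ R, (1 - if V i a then 1 else 0) :=
          prod_congr rfl fun i _ => by split_ifs <;> rfl
      _ = ∑ Q ∈ R.powerset, (-1) ^ #Q * if ∀ i ∈ Q, V i a then 1 else 0 := by
          simp only [prod_sub, prod_const_one, mul_one, prod_ite_zero]
  simp only [natCast_card_filter, hind, mul_sum]
  exact sum_comm

theorem card_piAntidiag [DecidableEq ι] (s : Finset ι) (m : ℕ) :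
    #(piAntidiag s m) = (#s + m - 1).choose m := by
  rw [← card_finsuppAntidiag_nat_eq_choose, finsuppAntidiag]
  simp

theorem filter_piAntidiag_forall_eq_zero [DecidableEq ι] (s : Finset ι) (m : ℕ) (p : ι → Prop)
    [DecidablePred p] [DecidablePred fun f : ι → ℕ => ∀ i ∈ s, ¬p i → f i = 0] :
    {f ∈ piAntidiag s m | ∀ i ∈ s, ¬p i → f i = 0} = piAntidiag {i ∈ s | p i} m := by
  ext f
  simp only [mem_filter, mem_piAntidiag]
  have hsum (h : ∀ i ∈ s, ¬p i → f i = 0) : ∑ i ∈ s with p i, f i = ∑ i ∈ s, f i :=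
    sum_filter_of_ne fun i hi => not_imp_comm.1 (h i hi)
  constructor
  · rintro ⟨⟨hm, hsupp⟩, h⟩
    exact ⟨(hsum h).trans hm, fun i hi => ⟨hsupp i hi, not_imp_comm.1 (h i (hsupp i hi)) hi⟩⟩
  · rintro ⟨hm, hsupp⟩
    have h : ∀ i ∈ s, ¬p i → f i = 0 := fun i _ => not_imp_comm.1 fun hi => (hsupp i hi).2
    exact ⟨⟨(hsum h).symm.trans hm, fun i hi => (hsupp i hi).1⟩, h⟩

theorem ncard_sum_eq_and_forall_exists [Fintype ι] [DecidableEq κ] (m : ℕ) (color : ι → κ)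
    (R : Finset κ) :
    ({f : ι → ℕ | ∑ i, f i = m ∧ ∀ c ∈ R, ∃ i, color i = c ∧ f i ≠ 0}.ncard : ℤ) =
      ∑ Q ∈ R.powerset, (-1 : ℤ) ^ #Q * ((#{i | color i ∉ Q} + m - 1).choose m : ℤ) := by
  classical
  have hfilter : {f : ι → ℕ | ∑ i, f i = m ∧ ∀ c ∈ R, ∃ i, color i = c ∧ f i ≠ 0} =
      ({f ∈ piAntidiag univ m | ∀ c ∈ R, ¬∀ i, color i = c → f i = 0} : Finset (ι → ℕ)) := by
    ext f
    simp
  rw [hfilter, Set.ncard_coe_finset, card_filter_forall_not]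
  refine sum_congr rfl fun Q _ => ?_
  rw [← card_piAntidiag, ← filter_piAntidiag_forall_eq_zero]
  congr 3
  grind

theorem sum_range_neg_one_pow_mul_choose_reflect {R : Type*} [Ring R] (k : ℕ) (g : ℕ → R) :
    ∑ m ∈ range k, (-1) ^ m * ((k - 1).choose m : R) * g (k - m) =
      ∑ j ∈ Icc 1 k, (-1) ^ (k + j) * ((k - 1).choose (j - 1) : R) * g j := by
  refine sum_bij' (fun m _ => k - m) (fun j _ => k - j) (by grind) (by grind) (by grind) (by grind)
    fun m hm => ?_
  have hm' : m < k := mem_range.1 hm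
  have hsign : (-1 : R) ^ (k + (k - m)) = (-1) ^ m := by
    rw [show k + (k - m) = m + 2 * (k - m) by omega, pow_add, pow_mul, neg_one_sq, one_pow,
      mul_one]
  rw [hsign, Nat.sub_right_comm, Nat.choose_symm (by omega)]

end Counting

section Residues

variable {k q : ℕ}

/-- Reduction modulo `k`. For `p` coprime to `q`, its fibres are the cycles of `i ↦ i + k * p` on
`ℤ/kqℤ`. -/
abbrev residue (k q : ℕ) : ZMod (k * q) →+* ZMod k := ZMod.castHom (dvd_mul_right k q) (ZMod k)

theorem residue_surjective : Function.Surjective (residue k q) := ZMod.castHom_surjective _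

theorem exists_add_nsmul_eq_iff_residue_eq [NeZero q] {p : ℕ} (hpq : p.Coprime q)
    {i s : ZMod (k * q)} :
    (∃ j : ℕ, i + j • ((k * p : ℕ) : ZMod (k * q)) = s) ↔ residue k q i = residue k q s := by
  constructor
  · rintro ⟨j, rfl⟩
    simp
  · intro h
    obtain ⟨w, hw⟩ := ZMod.intCast_surjective (s - i)
    obtain ⟨z, rfl⟩ : (k : ℤ) ∣ w := by
      rw [← ZMod.intCast_zmod_eq_zero_iff_dvd, ← map_intCast (residue k q), hw, map_sub, h,
        sub_self]
    obtain ⟨j, hj⟩ : ∃ j : ℕ, (q : ℤ) ∣ z - (j * p : ℕ) := by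
      refine ⟨(z * (p : ZMod q)⁻¹ : ZMod q).val, ?_⟩
      rw [← ZMod.intCast_eq_intCast_iff_dvd_sub]
      push_cast
      rw [ZMod.natCast_zmod_val, mul_assoc, mul_comm _ (p : ZMod q), ZMod.coe_mul_inv_eq_one p hpq,
        mul_one]
    refine ⟨j, ?_⟩
    rw [← eq_sub_iff_add_eq', ← hw, nsmul_eq_mul, ← Nat.cast_mul, ← Int.cast_natCast,
      ZMod.intCast_eq_intCast_iff_dvd_sub, Nat.cast_mul k q, Nat.mul_left_comm, Nat.cast_mul k,
      ← mul_sub]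
    exact mul_dvd_mul_left _ hj

theorem card_filter_residue_mem [NeZero k] [NeZero q] (S : Finset (ZMod k)) :
    #{i : ZMod (k * q) | residue k q i ∈ S} = #S * q := by
  have hfiber (c : ZMod k) : #{i | residue k q i = c} = #{i | residue k q i = 0} :=
    AddMonoidHom.card_fiber_eq_of_mem_range (residue k q) (residue_surjective c)
      (residue_surjective 0)
  have hsum (S : Finset (ZMod k)) :
      #{i | residue k q i ∈ S} = #S * #{i | residue k q i = 0} := by
    rw [card_eq_sum_card_fiberwise (s := {i | residue k q i ∈ S}) (t := S)
      (fun i hi => (mem_filter.1 (mem_coe.1 hi)).2), sum_const_nat]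
    intro c hc
    rw [filter_filter, ← hfiber c]
    congr 2
    grind
  have hq : #{i | residue k q i = 0} = q := by
    have huniv := hsum univ
    simp only [mem_univ, filter_true, card_univ, ZMod.card] at huniv
    exact (Nat.eq_of_mul_eq_mul_left (Nat.pos_of_neZero k) huniv).symm
  rw [hsum, hq]

end Residues

section Orbits

variable {k q : ℕ}

namespace IsRotational

theorem iterate_sigmad {d n : ℕ} {P : ZMod n} {t : ZMod n → ℝ} (ht : IsRotational d n P t) (j : ℕ)
    (i : ZMod n) : (sigmad d)^[j] (t i) = t (i + j • P) := by
  have hsemi : Function.Semiconj t (· + P) (sigmad d) := fun i => (ht.2.2.2 i).symm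
  rw [← hsemi.iterate_right j i, add_right_iterate]

variable {d p : ℕ} {t : ZMod (k * q) → ℝ}

theorem sigmaOrbit_eq_image [NeZero q] (hpq : p.Coprime q)
    (ht : IsRotational d (k * q) (k * p : ℕ) t) (i : ZMod (k * q)) :
    sigmaOrbit d (t i) = t '' (residue k q ⁻¹' {residue k q i}) := by
  ext x
  constructor
  · rintro ⟨j, rfl⟩
    exact ⟨_, ((exists_add_nsmul_eq_iff_residue_eq hpq).1 ⟨j, rfl⟩).symm,
      (ht.iterate_sigmad j i).symm⟩
  · rintro ⟨s, hs, rfl⟩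
    obtain ⟨j, rfl⟩ := (exists_add_nsmul_eq_iff_residue_eq hpq).2 (Set.mem_singleton_iff.1 hs).symm
    exact ⟨j, ht.iterate_sigmad j i⟩

theorem ncard_setOf_sigmaOrbit [NeZero k] [NeZero q] (hpq : p.Coprime q)
    (ht : IsRotational d (k * q) (k * p : ℕ) t) :
    {O | ∃ x ∈ Set.range t, O = sigmaOrbit d x}.ncard = k := by
  have htinj : Function.Injective t := fun i j hij => ZMod.val_injective _ <|
    le_antisymm (not_lt.1 fun h => (ht.2.1 j i h).ne' hij) (not_lt.1 fun h => (ht.2.1 i j h).ne hij)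
  have horbits : {O | ∃ x ∈ Set.range t, O = sigmaOrbit d x} =
      Set.range fun c : ZMod k => t '' (residue k q ⁻¹' {c}) := by
    ext O
    rw [Set.mem_ofPred_eq, Set.exists_range_iff]
    simp only [sigmaOrbit_eq_image hpq ht, Set.mem_range, eq_comm (a := O)]
    exact (residue_surjective.exists (p := fun c => t '' (residue k q ⁻¹' {c}) = O)).symm
  have hinj : Function.Injective fun c : ZMod k => t '' (residue k q ⁻¹' {c}) :=
    htinj.image_injective.comp (residue_surjective.preimage_injective.comp Set.singleton_injective)
  rw [horbits, Set.ncard_range_of_injective hinj, Nat.card_zmod]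

end IsRotational

theorem countRotSets_eq_ncard_isRotational [NeZero k] [NeZero q] (d : ℕ) {p : ℕ}
    (hpq : p.Coprime q) :
    countRotSets d q p k = {t | IsRotational d (k * q) (k * p : ℕ) t}.ncard := by
  have himage : {A : Set ℝ | (∃ t : ZMod (k * q) → ℝ, Set.range t = A ∧
        IsRotational d (k * q) ((k * p : ℕ) : ZMod (k * q)) t) ∧
        {O : Set ℝ | ∃ x ∈ A, O = sigmaOrbit d x}.ncard = k} =
      Set.range '' {t | IsRotational d (k * q) (k * p : ℕ) t} := by
    ext A
    constructor
    · rintro ⟨⟨t, rfl, ht⟩, -⟩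
      exact ⟨t, ht, rfl⟩
    · rintro ⟨t, ht, rfl⟩
      exact ⟨⟨t, rfl, ht⟩, IsRotational.ncard_setOf_sigmaOrbit hpq ht⟩
  have hinj : Set.InjOn Set.range {t | IsRotational d (k * q) (k * p : ℕ) t} :=
    fun t ht t' ht' => eq_of_range_eq_of_strictMono_val ht.2.1 ht'.2.1
  rw [countRotSets, ← hinj.ncard_image, ← himage]
  rfl

end Orbits

section CountCompositions

variable {k q : ℕ}

/-- The residue of the index of each part of a composition in `jumpCompositions`; the extra part
counts with `-1`, the class in which no nonzero part is required. -/
def color (k q : ℕ) (o : Option (ZMod (k * q))) : ZMod k := o.elim (-1) (residue k q)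

theorem card_filter_color_notMem [NeZero k] [NeZero q] {Q : Finset (ZMod k)} (hQ : -1 ∉ Q) :
    #{o | color k q o ∉ Q} = 1 + (k - #Q) * q := by
  have hcompl : #{i | residue k q i ∉ Q} = (k - #Q) * q := by
    have hcard := card_filter_residue_mem (k := k) (q := q) Qᶜ
    simpa only [mem_compl, card_compl, ZMod.card] using hcard
  rw [card_filter, Fintype.sum_option, ← hcompl, card_filter, color, Option.elim_none, if_pos hQ]
  rfl

theorem jumpCompositions_eq_setOf_color [NeZero k] [NeZero q] (d : ℕ) {p : ℕ} (hpq : p.Coprime q) :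
    jumpCompositions d ((k * p : ℕ) : ZMod (k * q)) =
      {f | ∑ o, f o = d - 2 ∧
        ∀ c ∈ univ.erase (-1 : ZMod k), ∃ o, color k q o = c ∧ f o ≠ 0} := by
  have hcycle (f : Option (ZMod (k * q)) → ℕ) (i : ZMod (k * q)) :
      (∃ j : ℕ, i + j • ((k * p : ℕ) : ZMod (k * q)) = -1 ∨
        f (some (i + j • ((k * p : ℕ) : ZMod (k * q)))) ≠ 0) ↔
      residue k q i ≠ -1 → ∃ s, residue k q s = residue k q i ∧ f (some s) ≠ 0 := by
    rw [exists_or, exists_add_nsmul_eq_iff_residue_eq hpq, map_neg, map_one, ← or_iff_not_imp_left]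
    refine or_congr_right ⟨fun ⟨j, hj⟩ => ⟨_, ?_, hj⟩, fun ⟨s, hs, hfs⟩ => ?_⟩
    · exact ((exists_add_nsmul_eq_iff_residue_eq hpq).1 ⟨j, rfl⟩).symm
    · obtain ⟨j, rfl⟩ := (exists_add_nsmul_eq_iff_residue_eq hpq).2 hs.symm
      exact ⟨j, hfs⟩
  have hcolor (f : Option (ZMod (k * q)) → ℕ) (c : ZMod k) (hc : c ≠ -1) :
      (∃ o, color k q o = c ∧ f o ≠ 0) ↔ ∃ s, residue k q s = c ∧ f (some s) ≠ 0 := by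
    simp only [Option.exists, color, Option.elim, hc.symm, false_and, false_or]
  ext f
  simp only [jumpCompositions, Set.mem_ofPred_eq, hcycle, mem_erase, mem_univ, and_true]
  rw [← (residue_surjective (q := q)).forall
    (p := fun c => c ≠ -1 → ∃ s, residue k q s = c ∧ f (some s) ≠ 0)]
  exact and_congr_right fun _ => forall₂_congr fun c hc => (hcolor f c hc).symm

theorem ncard_jumpCompositions [NeZero k] [NeZero q] (d : ℕ) {p : ℕ} (hpq : p.Coprime q) :
    ((jumpCompositions d ((k * p : ℕ) : ZMod (k * q))).ncard : ℤ) =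
      ∑ m ∈ range k, (-1 : ℤ) ^ m * ((k - 1).choose m : ℤ) *
        ((d - 2 + (k - m) * q).choose (d - 2) : ℤ) := by
  have hcard : #(univ.erase (-1 : ZMod k)) = k - 1 := by
    rw [card_erase_of_mem (mem_univ _), card_univ, ZMod.card]
  rw [jumpCompositions_eq_setOf_color d hpq, ncard_sum_eq_and_forall_exists]
  calc
    _ = ∑ Q ∈ (univ.erase (-1 : ZMod k)).powerset,
        (-1 : ℤ) ^ #Q * ((d - 2 + (k - #Q) * q).choose (d - 2) : ℤ) := by
      refine sum_congr rfl fun Q hQ => ?_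
      have hQ' : -1 ∉ Q := fun h => notMem_erase _ _ (mem_powerset.1 hQ h)
      rw [card_filter_color_notMem hQ']
      congr 3
      omega
    _ = _ := by
      rw [sum_powerset_apply_card fun m => (-1 : ℤ) ^ m *
        ((d - 2 + (k - m) * q).choose (d - 2) : ℤ), hcard, Nat.sub_add_cancel (NeZero.one_le)]
      refine sum_congr rfl fun m _ => ?_
      rw [nsmul_eq_mul]
      ring

end CountCompositions

theorem stmt14_general (d q p : ℕ) (hd : 2 ≤ d) (hq : 2 ≤ q) (hpq : p.Coprime q) {k : ℕ}
    (hk : 1 ≤ k) :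
    (countRotSets d q p k : ℤ) =
      ∑ j ∈ Icc 1 k, (-1 : ℤ) ^ (k + j) * ((k - 1).choose (j - 1) : ℤ) *
        ((d - 2 + j * q).choose (d - 2) : ℤ) := by
  have : NeZero k := ⟨by omega⟩
  have : NeZero q := ⟨by omega⟩
  have hP : ((k * p : ℕ) : ZMod (k * q)) ≠ 0 := fun h => by
    have hdvd : q ∣ p := Nat.dvd_of_mul_dvd_mul_left hk ((ZMod.natCast_eq_zero_iff _ _).1 h)
    have hq1 : q = 1 := Nat.eq_one_of_dvd_coprimes hpq hdvd dvd_rfl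
    omega
  rw [countRotSets_eq_ncard_isRotational d hpq, ncard_isRotational hd hP,
    ncard_jumpCompositions d hpq]
  exact sum_range_neg_one_pow_mul_choose_reflect k fun j => ((d - 2 + j * q).choose (d - 2) : ℤ)

theorem stmt14 (d q p : ℕ) (hd : 2 ≤ d) (hq : 2 ≤ q)
    (hp1 : 1 ≤ p) (hp2 : p ≤ q - 1) (hpq : Nat.gcd p q = 1) :
    ∀ k : ℕ, 1 ≤ k → k ≤ d - 1 →
      (countRotSets d q p k : ℤ) =
        ∑ j ∈ Finset.Icc 1 k,
          (-1 : ℤ) ^ (k + j) * ((k - 1).choose (j - 1) : ℤ) *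
            ((d - 2 + j * q).choose (d - 2) : ℤ) :=
  fun _ hk _ => stmt14_general d q p hd hq hpq hk
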